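/- arXiv:2306.08932 — 10 statements merged into one kernel-verified Lean document; each statement's English description precedes it below -/
import Mathlib

section
/- reg(T) is a regular subsemigroup of T_{E*}(X): (i) for all α, β ∈ reg(T), the composite αβ (the map x ↦ β(α(x))) again belongs to reg(T); and (ii) for every α ∈ reg(T) there exists β ∈ reg(T) such that αβα = α (i.e., α(β(α(x))) = α(x) for all x ∈ X). -/
universe u

/-- The semigroup `T_{E*}(X)` of maps preserving `E` in both directions. -/
def TEstar {X : Type u} (E : Setoid X) : Set (X → X) :=
  {α | ∀ x y : X, E.r x y ↔ E.r (α x) (α y)}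

/-- The `E`-class of `x`. -/
def cls {X : Type u} (E : Setoid X) (x : X) : Set X := {y | E.r x y}

/-- The regular part `reg(T)` of `T_{E*}(X)`: every `E`-class meets the range. -/
def regT {X : Type u} (E : Setoid X) : Set (X → X) :=
  {α | α ∈ TEstar E ∧ ∀ x : X, (cls E x ∩ Set.range α).Nonempty}

/-!
The maps in `T_{E*}(X)` are those inducing an injective self-map of `X/E`, and such a map lies in
`reg(T)` exactly when the induced map is also surjective. So `reg(T)` consists of the lifts of
permutations of `X/E`. Lifts compose. If `α` lifts `σ`, then any choice of `β y` in the class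
`σ⁻¹ [y]` gives a lift `β` of `σ⁻¹`; for `y` in the range of `α` this class contains every
`α`-preimage of `y`, and choosing `β y` among these gives `αβα = α`.
-/

open Function

section Semiconj

variable {X Q : Type*} {p : X → Q} {α : X → X} {σ : Equiv.Perm Q}

theorem exists_semiconj_symm_comp_comp_eq_self (hp : Surjective p) (h : Semiconj p α σ) :
    ∃ β : X → X, Semiconj p β σ.symm ∧ α ∘ β ∘ α = α := by
  have exists_lift (y : X) : ∃ z, p z = σ.symm (p y) ∧ (y ∈ Set.range α → α z = y) := by
    by_cases hy : y ∈ Set.range α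
    · obtain ⟨z, rfl⟩ := hy
      exact ⟨z, σ.eq_symm_apply.2 (h z).symm, fun _ => rfl⟩
    · obtain ⟨z, hz⟩ := hp (σ.symm (p y))
      exact ⟨z, hz, fun hy' => absurd hy' hy⟩
  choose β hβ hαβ using exists_lift
  exact ⟨β, hβ, funext fun x => hαβ (α x) (Set.mem_range_self x)⟩

end Semiconj

section InducedMap

variable {X : Type u} {E : Setoid X} {α : X → X}

theorem mem_TEstar_iff_exists_injective :
    α ∈ TEstar E ↔
      ∃ f : Quotient E → Quotient E, Injective f ∧ Semiconj (Quotient.mk E) α f := by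
  constructor
  · intro hα
    refine ⟨Quotient.map α fun x y => (hα x y).1, ?_, fun _ => rfl⟩
    rintro ⟨x⟩ ⟨y⟩ hxy
    exact Quotient.sound ((hα x y).2 (Quotient.exact hxy))
  · rintro ⟨f, hf, h⟩ x y
    calc
      E.r x y ↔ Quotient.mk E x = Quotient.mk E y := Quotient.eq.symm
      _ ↔ f (Quotient.mk E x) = f (Quotient.mk E y) := hf.eq_iff.symm
      _ ↔ Quotient.mk E (α x) = Quotient.mk E (α y) := by rw [h.eq, h.eq]
      _ ↔ E.r (α x) (α y) := Quotient.eq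

theorem forall_cls_inter_range_nonempty_iff_surjective {f : Quotient E → Quotient E}
    (h : Semiconj (Quotient.mk E) α f) :
    (∀ x : X, (cls E x ∩ Set.range α).Nonempty) ↔ Surjective f := by
  constructor
  · rintro hα ⟨x⟩
    obtain ⟨_, hx, y, rfl⟩ := hα x
    exact ⟨Quotient.mk E y, (h y).symm.trans (Quotient.sound hx).symm⟩
  · intro hf x
    obtain ⟨⟨y⟩, hy⟩ := hf (Quotient.mk E x)
    exact ⟨α y, Quotient.exact (hy.symm.trans (h y).symm), y, rfl⟩

theorem mem_regT_iff_exists_perm :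
    α ∈ regT E ↔ ∃ σ : Equiv.Perm (Quotient E), Semiconj (Quotient.mk E) α σ := by
  constructor
  · rintro ⟨hα, hrange⟩
    obtain ⟨f, hinj, hf⟩ := mem_TEstar_iff_exists_injective.1 hα
    have hsurj : Surjective f := (forall_cls_inter_range_nonempty_iff_surjective hf).1 hrange
    exact ⟨Equiv.ofBijective f ⟨hinj, hsurj⟩, hf⟩
  · rintro ⟨σ, hσ⟩
    exact ⟨mem_TEstar_iff_exists_injective.2 ⟨σ, σ.injective, hσ⟩,
      (forall_cls_inter_range_nonempty_iff_surjective hσ).2 σ.surjective⟩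

theorem comp_mem_regT {β : X → X} (hβ : β ∈ regT E) (hα : α ∈ regT E) : β ∘ α ∈ regT E := by
  obtain ⟨σ, hσ⟩ := mem_regT_iff_exists_perm.1 hα
  obtain ⟨τ, hτ⟩ := mem_regT_iff_exists_perm.1 hβ
  exact mem_regT_iff_exists_perm.2 ⟨σ.trans τ, hτ.comp_right hσ⟩

theorem exists_mem_regT_comp_comp_eq_self (hα : α ∈ regT E) : ∃ β ∈ regT E, α ∘ β ∘ α = α := by
  obtain ⟨σ, hσ⟩ := mem_regT_iff_exists_perm.1 hα
  obtain ⟨β, hβ, hαβα⟩ := exists_semiconj_symm_comp_comp_eq_self Quotient.mk_surjective hσ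
  exact ⟨β, mem_regT_iff_exists_perm.2 ⟨σ.symm, hβ⟩, hαβα⟩

end InducedMap

/-- `reg(T)` is a regular subsemigroup of `T_{E*}(X)`. -/
theorem stmt0 {X : Type u} [Nonempty X] (E : Setoid X) :
    (∀ α β : X → X, α ∈ regT E → β ∈ regT E → β ∘ α ∈ regT E) ∧
    (∀ α : X → X, α ∈ regT E → ∃ β ∈ regT E, ∀ x : X, α (β (α x)) = α x) := by
  refine ⟨fun α β hα hβ => comp_mem_regT hβ hα, fun α hα => ?_⟩
  obtain ⟨β, hβ, hαβα⟩ := exists_mem_regT_comp_comp_eq_self hα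
  exact ⟨β, hβ, congrFun hαβα⟩
end

section
/- reg(T) is the largest regular subsemigroup of T_{E*}(X): if U is a subsemigroup of T_{E*}(X) such that every α ∈ U is regular in U (i.e., there exists β ∈ U with αβα = α), then U ⊆ reg(T). -/
universe u

/-!
If `αβα = α`, then `α ∘ β` is an idempotent of `T_{E*}(X)`. An idempotent reflecting `E` moves
every point `x` inside its own class, since `x` and its image have the same image. Hence `α (β x)`
is a point of the range of `α` in the class of `x`.
-/

theorem rel_apply_of_idempotent {X : Type*} {r : X → X → Prop} {e : X → X}
    (hr : ∀ x, r x x) (hreflect : ∀ x y, r (e x) (e y) → r x y)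
    (hidem : ∀ x, e (e x) = e x) (x : X) : r x (e x) := by
  apply hreflect
  rw [hidem]
  exact hr (e x)

theorem comp_mem_TEstar {X : Type u} {E : Setoid X} {α β : X → X}
    (hα : α ∈ TEstar E) (hβ : β ∈ TEstar E) : α ∘ β ∈ TEstar E :=
  fun x y => (hβ x y).trans (hα (β x) (β y))

theorem stmt1_general {X : Type u} {E : Setoid X} {α β : X → X}
    (hα : α ∈ TEstar E) (hβ : β ∈ TEstar E) (hαβα : ∀ x, α (β (α x)) = α x) :
    α ∈ regT E := by
  have hidem : ∀ x, (α ∘ β) ((α ∘ β) x) = (α ∘ β) x := fun x => hαβα (β x)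
  have hrel : ∀ x, E.r x ((α ∘ β) x) :=
    rel_apply_of_idempotent E.refl (fun x y => (comp_mem_TEstar hα hβ x y).mpr) hidem
  exact ⟨hα, fun x => ⟨α (β x), hrel x, Set.mem_range_self (β x)⟩⟩

/-- `reg(T)` is the largest regular subsemigroup of `T_{E*}(X)`. -/
theorem stmt1 {X : Type u} [Nonempty X] (E : Setoid X) (U : Set (X → X))
    (hUsub : U ⊆ TEstar E)
    (hUclosed : ∀ α ∈ U, ∀ β ∈ U, β ∘ α ∈ U)
    (hUreg : ∀ α ∈ U, ∃ β ∈ U, ∀ x : X, α (β (α x)) = α x) :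
    U ⊆ regT E := by
  intro α hα
  obtain ⟨β, hβ, hαβα⟩ := hUreg α hα
  exact stmt1_general (hUsub hα) (hUsub hβ) hαβα
end

section
/- For α, β ∈ reg(T), the following are equivalent: (1) there exist γ, δ ∈ reg(T) with γα = β and δβ = α (i.e., β(x) = α(γ(x)) and α(x) = β(δ(x)) for all x ∈ X); (2) Xα = Xβ (α and β have the same range). In other words, α and β are Green's L-related in the semigroup reg(T) if and only if their ranges coincide. -/
universe u

/-! For `α, β ∈ T_{E*}(X)`, any set-theoretic factor `γ` with `α ∘ γ = β` is automatically in
`T_{E*}(X)`, because `α` preserves and reflects `E`. If moreover `range α = range β`, then every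
`α x` equals some `α (γ y)`, so `γ y` lies in the class of `x`: this makes `γ` regular. -/

section

variable {X : Type u} {E : Setoid X} {α β γ : X → X}

theorem mem_TEstar_of_comp (hα : α ∈ TEstar E) (hαγ : α ∘ γ ∈ TEstar E) : γ ∈ TEstar E :=
  fun x y => (hαγ x y).trans (hα (γ x) (γ y)).symm

theorem mem_regT_of_range_subset_range_comp (hα : α ∈ TEstar E) (hαγ : α ∘ γ ∈ TEstar E)
    (h : Set.range α ⊆ Set.range (α ∘ γ)) : γ ∈ regT E := by
  refine ⟨mem_TEstar_of_comp hα hαγ, fun x => ?_⟩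
  obtain ⟨y, hy : α (γ y) = α x⟩ := h (Set.mem_range_self x)
  have hxy : E.r x (γ y) := (hα x (γ y)).mpr (hy ▸ E.refl (α x))
  exact ⟨γ y, hxy, Set.mem_range_self y⟩

theorem exists_mem_regT_comp_eq_of_range_eq (hα : α ∈ TEstar E) (hβ : β ∈ TEstar E)
    (h : Set.range α = Set.range β) : ∃ γ ∈ regT E, α ∘ γ = β := by
  obtain ⟨γ, rfl⟩ := Set.range_subset_range_iff_exists_comp.mp h.ge
  exact ⟨γ, mem_regT_of_range_subset_range_comp hα hβ h.le, rfl⟩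

theorem stmt2_general (hα : α ∈ TEstar E) (hβ : β ∈ TEstar E) :
    (∃ γ ∈ regT E, ∃ δ ∈ regT E, α ∘ γ = β ∧ β ∘ δ = α) ↔
      Set.range α = Set.range β := by
  constructor
  · rintro ⟨γ, -, δ, -, hγ, hδ⟩
    exact Set.Subset.antisymm
      (Set.range_subset_range_iff_exists_comp.mpr ⟨δ, hδ.symm⟩)
      (Set.range_subset_range_iff_exists_comp.mpr ⟨γ, hγ.symm⟩)
  · intro h
    obtain ⟨γ, hγ, hαγ⟩ := exists_mem_regT_comp_eq_of_range_eq hα hβ h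
    obtain ⟨δ, hδ, hβδ⟩ := exists_mem_regT_comp_eq_of_range_eq hβ hα h.symm
    exact ⟨γ, hγ, δ, hδ, hαγ, hβδ⟩

end

/-- Green's `L`-relation on `reg(T)`: `α L β` iff `Xα = Xβ`. -/
theorem stmt2 {X : Type u} [Nonempty X] (E : Setoid X) (α β : X → X)
    (hα : α ∈ regT E) (hβ : β ∈ regT E) :
    (∃ γ ∈ regT E, ∃ δ ∈ regT E, α ∘ γ = β ∧ β ∘ δ = α) ↔
      Set.range α = Set.range β :=
  stmt2_general hα.1 hβ.1
end

section
/- For α, β ∈ reg(T), the following are equivalent: (1) α and β are Green's D-related in reg(T), i.e., there exists γ ∈ reg(T) such that Xα = Xγ and ker(γ) = ker(β); (2) there exists δ ∈ reg(T) such that the restriction of δ to Xα is a bijection from Xα onto Xβ; (3) there exists δ ∈ T_{E*}(X) such that the restriction of δ to Xα is a bijection from Xα onto Xβ. -/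
universe u

/-!
For a subset `A` of `X`, a map `γ` with range `A` and the kernel of `β`, and a map `δ` restricting
to a bijection from `A` onto the range of `β`, are the two factors of `β = δ ∘ γ`. Given `γ`,
regularity provides `σ` with `γ ∘ σ ∘ γ = γ`, and `δ = β ∘ σ` works; given `δ`, one takes
`γ = (δ|_A)⁻¹ ∘ β`. When `δ ∈ T_{E*}(X)` and `δ ∘ γ ∈ reg(T)`, both factors lie in `reg(T)`.
-/

section Factorization

variable {ι Y Z : Type*}

theorem bijOn_range_range_iff_of_comp_eq {f : ι → Y} {g : Y → Z} {h : ι → Z} (hgf : g ∘ f = h) :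
    Set.BijOn g (Set.range f) (Set.range h) ↔ ∀ i j, f i = f j ↔ h i = h j := by
  subst hgf
  rw [Set.range_comp]
  constructor
  · exact fun hg i j => (hg.injOn.eq_iff ⟨i, rfl⟩ ⟨j, rfl⟩).symm
  · intro hker
    refine Set.InjOn.bijOn_image ?_
    rintro _ ⟨i, rfl⟩ _ ⟨j, rfl⟩ hij
    exact (hker i j).2 hij

theorem exists_comp_eq_and_range_eq_of_bijOn {s : Set Y} {g : Y → Z} {h : ι → Z}
    (hg : Set.BijOn g s (Set.range h)) : ∃ f : ι → Y, g ∘ f = h ∧ Set.range f = s := by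
  choose f hf_mem hf_eq using fun i => hg.surjOn ⟨i, rfl⟩
  refine ⟨f, funext hf_eq, (Set.range_subset_iff.2 hf_mem).antisymm fun y hy => ?_⟩
  obtain ⟨i, hi⟩ := hg.mapsTo hy
  exact ⟨i, hg.injOn (hf_mem i) hy ((hf_eq i).trans hi)⟩

end Factorization

section Regular

variable {X : Type u} {E : Setoid X}

theorem comp_mem_TEstar_s5 {φ ψ : X → X} (hψ : ψ ∈ TEstar E) (hφ : φ ∈ TEstar E) :
    ψ ∘ φ ∈ TEstar E :=
  fun x y => (hφ x y).trans (hψ (φ x) (φ y))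

theorem mem_TEstar_of_comp_mem_TEstar {φ ψ : X → X} (hψ : ψ ∈ TEstar E)
    (hψφ : ψ ∘ φ ∈ TEstar E) : φ ∈ TEstar E :=
  fun x y => (hψφ x y).trans (hψ (φ x) (φ y)).symm

theorem mem_TEstar_of_forall_rel {φ : X → X} (h : ∀ x, E.r x (φ x)) : φ ∈ TEstar E :=
  fun x y => ⟨fun hxy => E.trans (E.symm (h x)) (E.trans hxy (h y)),
    fun hxy => E.trans (h x) (E.trans hxy (E.symm (h y)))⟩

theorem left_mem_regT_of_comp_mem_regT {φ ψ : X → X} (hψ : ψ ∈ TEstar E)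
    (hψφ : ψ ∘ φ ∈ regT E) : ψ ∈ regT E :=
  ⟨hψ, fun x => (hψφ.2 x).mono (Set.inter_subset_inter_right _ (Set.range_comp_subset_range φ ψ))⟩

theorem right_mem_regT_of_comp_mem_regT {φ ψ : X → X} (hψ : ψ ∈ TEstar E)
    (hψφ : ψ ∘ φ ∈ regT E) : φ ∈ regT E := by
  refine ⟨mem_TEstar_of_comp_mem_TEstar hψ hψφ.1, fun x => ?_⟩
  obtain ⟨_, hxy, y, rfl⟩ := hψφ.2 (ψ x)
  exact ⟨φ y, (hψ x (φ y)).2 hxy, y, rfl⟩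

theorem exists_mem_TEstar_comp_comp_eq {γ : X → X} (hγ : γ ∈ regT E) :
    ∃ σ ∈ TEstar E, γ ∘ σ ∘ γ = γ := by
  have exists_preimage (z : X) : ∃ x, E.r z (γ x) ∧ (z ∈ Set.range γ → γ x = z) := by
    by_cases hz : z ∈ Set.range γ
    · obtain ⟨x, rfl⟩ := hz
      exact ⟨x, E.refl _, fun _ => rfl⟩
    · obtain ⟨_, hzx, x, rfl⟩ := hγ.2 z
      exact ⟨x, hzx, fun h => absurd h hz⟩
  choose σ hσ_rel hσ_eq using exists_preimage
  exact ⟨σ, mem_TEstar_of_comp_mem_TEstar hγ.1 (mem_TEstar_of_forall_rel hσ_rel),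
    funext fun x => hσ_eq (γ x) ⟨x, rfl⟩⟩

theorem stmt5_general (A : Set X) {β : X → X} (hβ : β ∈ regT E) :
    List.TFAE
      [ ∃ γ ∈ regT E, A = Set.range γ ∧ ∀ x y : X, γ x = γ y ↔ β x = β y,
        ∃ δ ∈ regT E, Set.BijOn δ A (Set.range β),
        ∃ δ ∈ TEstar E, Set.BijOn δ A (Set.range β) ] := by
  tfae_have 1 → 2 := by
    rintro ⟨γ, hγ, rfl, hker⟩
    obtain ⟨σ, hσ, hγσγ⟩ := exists_mem_TEstar_comp_comp_eq hγ
    have hδγ : (β ∘ σ) ∘ γ = β := funext fun x => (hker _ _).1 (congrFun hγσγ x)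
    exact ⟨β ∘ σ, left_mem_regT_of_comp_mem_regT (comp_mem_TEstar_s5 hβ.1 hσ) (hδγ.symm ▸ hβ),
      (bijOn_range_range_iff_of_comp_eq hδγ).2 hker⟩
  tfae_have 2 → 3 := fun ⟨δ, hδ, hbij⟩ => ⟨δ, hδ.1, hbij⟩
  tfae_have 3 → 1 := by
    rintro ⟨δ, hδ, hbij⟩
    obtain ⟨γ, hδγ, rfl⟩ := exists_comp_eq_and_range_eq_of_bijOn hbij
    exact ⟨γ, right_mem_regT_of_comp_mem_regT hδ (hδγ.symm ▸ hβ), rfl,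
      (bijOn_range_range_iff_of_comp_eq hδγ).1 hbij⟩
  tfae_finish

end Regular

/-- Green's `D`-relation on `reg(T)`. -/
theorem stmt5 {X : Type u} [Nonempty X] (E : Setoid X) (α β : X → X)
    (hα : α ∈ regT E) (hβ : β ∈ regT E) :
    List.TFAE
      [ ∃ γ ∈ regT E, Set.range α = Set.range γ ∧ ∀ x y : X, γ x = γ y ↔ β x = β y,
        ∃ δ ∈ regT E, Set.BijOn δ (Set.range α) (Set.range β),
        ∃ δ ∈ TEstar E, Set.BijOn δ (Set.range α) (Set.range β) ] :=
  stmt5_general (Set.range α) hβ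
end

section
/- For α, β ∈ reg(T), the following are equivalent: (1) α and β are Green's J-related in reg(T), i.e., there exist λ, μ, λ', μ' ∈ reg(T) such that λαμ = β and λ'βμ' = α (as functions, β = μ ∘ α ∘ λ and α = μ' ∘ β ∘ λ'); (2) the cardinality of Xα equals the cardinality of Xβ, and there exist ρ, τ ∈ reg(T) such that for every E-class A ∈ X/E there exist E-classes B, C ∈ X/E with Aα ⊆ (Bβ)ρ and Aβ ⊆ (Cα)τ (i.e., α(A) ⊆ ρ(β(B)) and β(A) ⊆ τ(α(C))). -/
universe u

/-- The `E`-class indexed by an element of the quotient `X/E`. -/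
def clsQ {X : Type u} (E : Setoid X) (A : Quotient E) : Set X :=
  {x | Quotient.mk E x = A}

open Set

/-!
For a fixed `σ ∈ T_{E*}(X)` and `β ∈ reg(T)`, the equation `σ ∘ l = β` has a solution `l : X → X`
iff `range β ⊆ range σ`, and every solution already lies in `reg(T)`: `σ` preserves and reflects
`E`, so `l` does too because `β` does, and if `β` meets the class of `σ x` then `l` meets the class
of `x`. With `σ = τ ∘ α` this says that `β` lies below `α` in the `J`-order iff
`range β ⊆ τ '' range α` for some `τ ∈ T_{E*}(X)`. Such an inclusion bounds the cardinality of
`range β` by that of `range α`, and it holds class by class because the factor `l` maps each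
`E`-class into an `E`-class.
-/

section

variable {X : Type u} {E : Setoid X} {α β σ τ l : X → X}

theorem comp_mem_TEstar_iff (hσ : σ ∈ TEstar E) : σ ∘ l ∈ TEstar E ↔ l ∈ TEstar E :=
  forall₂_congr fun x y => iff_congr Iff.rfl (hσ (l x) (l y)).symm

theorem mem_regT_of_comp_mem_regT (hσ : σ ∈ TEstar E) (h : σ ∘ l ∈ regT E) : l ∈ regT E := by
  refine ⟨(comp_mem_TEstar_iff hσ).1 h.1, fun x => ?_⟩
  obtain ⟨_, hxy, y, rfl⟩ := h.2 (σ x)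
  exact ⟨l y, (hσ x (l y)).2 hxy, y, rfl⟩

theorem mem_regT_of_range_subset (hτ : τ ∈ TEstar E) (hβ : β ∈ regT E)
    (h : range β ⊆ range τ) : τ ∈ regT E :=
  ⟨hτ, fun x => (hβ.2 x).mono (inter_subset_inter_right _ h)⟩

theorem exists_mem_regT_comp_eq_iff (hσ : σ ∈ TEstar E) (hβ : β ∈ regT E) :
    (∃ l ∈ regT E, σ ∘ l = β) ↔ range β ⊆ range σ := by
  rw [range_subset_range_iff_exists_comp]
  constructor
  · rintro ⟨l, -, h⟩
    exact ⟨l, h.symm⟩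
  · rintro ⟨l, rfl⟩
    exact ⟨l, mem_regT_of_comp_mem_regT hσ hβ, rfl⟩

theorem exists_comp_comp_eq_iff (hα : α ∈ TEstar E) (hβ : β ∈ regT E) :
    (∃ l ∈ regT E, ∃ m ∈ regT E, m ∘ α ∘ l = β) ↔
      ∃ τ ∈ TEstar E, range β ⊆ τ '' range α := by
  constructor
  · rintro ⟨l, hl, m, hm, h⟩
    refine ⟨m, hm.1, ?_⟩
    rw [← range_comp]
    exact (exists_mem_regT_comp_eq_iff ((comp_mem_TEstar_iff hm.1).2 hα) hβ).1 ⟨l, hl, h⟩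
  · rintro ⟨τ, hτ, h⟩
    have hτ_reg : τ ∈ regT E := mem_regT_of_range_subset hτ hβ (h.trans (image_subset_range _ _))
    rw [← range_comp] at h
    obtain ⟨l, hl, hlβ⟩ :=
      (exists_mem_regT_comp_eq_iff ((comp_mem_TEstar_iff hτ).2 hα) hβ).2 h
    exact ⟨l, hl, τ, hτ_reg, hlβ⟩

theorem image_clsQ_mk_subset (hl : l ∈ TEstar E) (a : X) :
    l '' clsQ E (Quotient.mk E a) ⊆ clsQ E (Quotient.mk E (l a)) := by
  rintro _ ⟨x, hx, rfl⟩
  exact Quotient.sound ((hl x a).1 (Quotient.exact hx))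

theorem exists_image_clsQ_subset (hσ : σ ∈ TEstar E) (hβ : β ∈ TEstar E)
    (h : range β ⊆ range σ) (A : Quotient E) : ∃ C : Quotient E, β '' clsQ E A ⊆ σ '' clsQ E C := by
  obtain ⟨l, rfl⟩ := range_subset_range_iff_exists_comp.1 h
  obtain ⟨a, rfl⟩ := Quotient.exists_rep A
  refine ⟨Quotient.mk E (l a), ?_⟩
  rw [image_comp]
  exact image_mono (image_clsQ_mk_subset ((comp_mem_TEstar_iff hσ).1 hβ) a)

theorem exists_image_clsQ_subset_image_image (hτ : τ ∈ TEstar E) (hα : α ∈ TEstar E)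
    (hβ : β ∈ TEstar E) (h : range β ⊆ τ '' range α) (A : Quotient E) :
    ∃ C : Quotient E, β '' clsQ E A ⊆ τ '' (α '' clsQ E C) := by
  simp only [← image_comp]
  exact exists_image_clsQ_subset ((comp_mem_TEstar_iff hτ).2 hα) hβ (by rwa [range_comp]) A

end

theorem range_subset_image_range_of_forall_clsQ {X Y Z : Type*} {E : Setoid X} {α : X → Y}
    {β : X → Z} {τ : Y → Z}
    (h : ∀ A : Quotient E, ∃ C : Quotient E, β '' clsQ E A ⊆ τ '' (α '' clsQ E C)) :
    range β ⊆ τ '' range α := by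
  rintro _ ⟨x, rfl⟩
  obtain ⟨C, hC⟩ := h (Quotient.mk E x)
  exact image_mono (image_subset_range α _) (hC ⟨x, rfl, rfl⟩)

theorem mk_le_mk_of_subset_image {Y Z : Type u} {τ : Y → Z} {s : Set Y} {t : Set Z}
    (h : t ⊆ τ '' s) : Cardinal.mk t ≤ Cardinal.mk s :=
  (Cardinal.mk_le_mk_of_subset h).trans Cardinal.mk_image_le

theorem stmt6_general {X : Type u} (E : Setoid X) (α β : X → X)
    (hα : α ∈ regT E) (hβ : β ∈ regT E) :
    List.TFAE [
      (∃ l ∈ regT E, ∃ m ∈ regT E, m ∘ α ∘ l = β) ∧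
        (∃ l' ∈ regT E, ∃ m' ∈ regT E, m' ∘ β ∘ l' = α),
      Cardinal.mk (range α) = Cardinal.mk (range β) ∧
        ∃ ρ ∈ regT E, ∃ τ ∈ regT E, ∀ A : Quotient E, ∃ B C : Quotient E,
          α '' clsQ E A ⊆ ρ '' (β '' clsQ E B) ∧ β '' clsQ E A ⊆ τ '' (α '' clsQ E C),
      (∃ τ ∈ TEstar E, range β ⊆ τ '' range α) ∧ ∃ ρ ∈ TEstar E, range α ⊆ ρ '' range β] := by
  tfae_have 1 ↔ 3 :=
    and_congr (exists_comp_comp_eq_iff hα.1 hβ) (exists_comp_comp_eq_iff hβ.1 hα)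
  tfae_have 2 → 3 := by
    rintro ⟨-, ρ, hρ, τ, hτ, h⟩
    choose B C hB hC using h
    exact ⟨⟨τ, hτ.1, range_subset_image_range_of_forall_clsQ fun A => ⟨C A, hC A⟩⟩,
      ⟨ρ, hρ.1, range_subset_image_range_of_forall_clsQ fun A => ⟨B A, hB A⟩⟩⟩
  tfae_have 3 → 2 := by
    rintro ⟨⟨τ, hτ, hβα⟩, ρ, hρ, hαβ⟩
    refine ⟨(mk_le_mk_of_subset_image hαβ).antisymm (mk_le_mk_of_subset_image hβα),
      ρ, mem_regT_of_range_subset hρ hα (hαβ.trans (image_subset_range _ _)),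
      τ, mem_regT_of_range_subset hτ hβ (hβα.trans (image_subset_range _ _)), fun A => ?_⟩
    obtain ⟨B, hB⟩ := exists_image_clsQ_subset_image_image hρ hβ.1 hα.1 hαβ A
    obtain ⟨C, hC⟩ := exists_image_clsQ_subset_image_image hτ hα.1 hβ.1 hβα A
    exact ⟨B, C, hB, hC⟩
  tfae_finish

/-- Green's `J`-relation on `reg(T)`. -/
theorem stmt6 {X : Type u} [Nonempty X] (E : Setoid X) (α β : X → X)
    (hα : α ∈ regT E) (hβ : β ∈ regT E) :
    ((∃ l ∈ regT E, ∃ m ∈ regT E, m ∘ α ∘ l = β) ∧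
     (∃ l' ∈ regT E, ∃ m' ∈ regT E, m' ∘ β ∘ l' = α)) ↔
      (Cardinal.mk ↥(Set.range α) = Cardinal.mk ↥(Set.range β) ∧
       ∃ ρ ∈ regT E, ∃ τ ∈ regT E, ∀ A : Quotient E, ∃ B C : Quotient E,
         α '' clsQ E A ⊆ ρ '' (β '' clsQ E B) ∧
         β '' clsQ E A ⊆ τ '' (α '' clsQ E C)) :=
  (stmt6_general E α β hα hβ).out 0 1
end

section
/- For α, β ∈ reg(T), the following are equivalent: (1) there exists a bijection ρ from the set X/E of E-classes onto itself such that |Aα| ≤ |(ρ(A))β| (cardinal inequality) for every E-class A; (2) there exist λ, μ ∈ reg(T) such that α = λβμ (as functions, α = μ ∘ β ∘ λ). -/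
universe u

/-!
A map belongs to `reg(T)` exactly when it induces a permutation of `X/E`. If `α = λβμ`, the
permutation induced by `λ` serves as `ρ`, since `Aα = ((Aλ)β)μ` and `Aλ ⊆ ρ(A)`. Conversely, given
`ρ`, embed `Aα` into `(ρ(A))β` for every `A` and let `λ` send `x ∈ A` to a `β`-preimage, in `ρ(A)`,
of the point corresponding to `xα`. Then `xα` is determined by `xλβ`: inside a class because of the
embedding, across classes because `λβ` separates them. Hence `α` factors as `λβμ`, where outside the
range of `λβ` the map `μ` is chosen freely within the class prescribed by the induced permutations.
-/

/-- The map `f` sends `E`-classes to `F`-classes according to the bijection `p : X/E ≃ Y/F`. For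
`E = F` the maps inducing some `p` form `reg(T)`; domain and codomain may differ
because the factorization `α = λβμ` makes sense, and is proved, for maps between different sets. -/
def Induces {X Y : Type*} {E : Setoid X} {F : Setoid Y} (p : Quotient E ≃ Quotient F)
    (f : X → Y) : Prop :=
  ∀ x, Quotient.mk F (f x) = p (Quotient.mk E x)

namespace Induces

variable {X Y Z : Type*} {E : Setoid X} {F : Setoid Y} {G : Setoid Z}
  {p : Quotient E ≃ Quotient F} {q : Quotient F ≃ Quotient G} {f : X → Y} {g : Y → Z}

theorem comp (hg : Induces q g) (hf : Induces p f) : Induces (p.trans q) (g ∘ f) := fun x => by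
  rw [Function.comp_apply, hg, hf, Equiv.trans_apply]

theorem mk_eq_mk_iff (hf : Induces p f) {x y : X} :
    Quotient.mk F (f x) = Quotient.mk F (f y) ↔ Quotient.mk E x = Quotient.mk E y := by
  rw [hf, hf, p.apply_eq_iff_eq]

theorem rel_iff (hf : Induces p f) {x y : X} : F.r (f x) (f y) ↔ E.r x y :=
  Quotient.eq.symm.trans (hf.mk_eq_mk_iff.trans Quotient.eq)

theorem exists_rel_apply (hf : Induces p f) (y : Y) : ∃ x, F.r y (f x) := by
  obtain ⟨x, hx⟩ := Quotient.exists_rep (p.symm (Quotient.mk F y))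
  exact ⟨x, Quotient.exact (by rw [hf, hx, p.apply_symm_apply])⟩

theorem image_clsQ_subset (hf : Induces p f) (A : Quotient E) :
    f '' clsQ E A ⊆ clsQ F (p A) := by
  rintro _ ⟨x, rfl, rfl⟩
  exact hf x

theorem exists_comp_eq {r : Quotient E ≃ Quotient G} {h : X → Z} (hf : Induces p f)
    (hh : Induces r h) (hfh : h.FactorsThrough f) :
    ∃ m : Y → Z, Induces (p.symm.trans r) m ∧ m ∘ f = h := by
  let m : Y → Z := Function.extend f h fun y => (p.symm.trans r (Quotient.mk F y)).out
  have m_apply (x : X) : m (f x) = h x := hfh.extend_apply _ x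
  refine ⟨m, fun y => ?_, funext m_apply⟩
  by_cases hy : ∃ x, f x = y
  · obtain ⟨x, rfl⟩ := hy
    rw [m_apply, hh, hf, Equiv.trans_apply, p.symm_apply_apply]
  · rw [show m y = _ from Function.extend_apply' _ _ y hy, Quotient.out_eq]

end Induces

theorem exists_induces_of_mem_regT {X : Type*} {E : Setoid X} {f : X → X} (hf : f ∈ regT E) :
    ∃ p : Quotient E ≃ Quotient E, Induces p f := by
  obtain ⟨rel_iff, meets⟩ := hf
  let φ : Quotient E → Quotient E := Quotient.map f fun x y => (rel_iff x y).1
  have φ_injective : φ.Injective := by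
    rintro ⟨x⟩ ⟨y⟩ hxy
    exact Quotient.sound ((rel_iff x y).2 (Quotient.exact hxy))
  have φ_surjective : φ.Surjective := by
    rintro ⟨y⟩
    obtain ⟨_, hyx, x, rfl⟩ := meets y
    exact ⟨Quotient.mk E x, Quotient.sound (E.symm hyx)⟩
  exact ⟨Equiv.ofBijective φ ⟨φ_injective, φ_surjective⟩, fun _ => rfl⟩

theorem Induces.mem_regT {X : Type*} {E : Setoid X} {p : Quotient E ≃ Quotient E} {f : X → X}
    (hf : Induces p f) : f ∈ regT E := by
  refine ⟨fun _ _ => hf.rel_iff.symm, fun y => ?_⟩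
  obtain ⟨x, hyx⟩ := hf.exists_rel_apply y
  exact ⟨f x, hyx, x, rfl⟩

theorem mem_regT_iff_exists_induces {X : Type*} {E : Setoid X} {f : X → X} :
    f ∈ regT E ↔ ∃ p : Quotient E ≃ Quotient E, Induces p f :=
  ⟨exists_induces_of_mem_regT, fun ⟨_, hf⟩ => hf.mem_regT⟩

section Factorization

variable {X X' Y Y' : Type*} {E : Setoid X} {E' : Setoid X'} {F : Setoid Y} {F' : Setoid Y'}
  {ρ : Quotient E ≃ Quotient E'} {α : X → Y} {β : X' → Y'}

theorem exists_induces_factorsThrough_comp {q : Quotient E' ≃ Quotient F'} (hβ : Induces q β)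
    (hρ : ∀ A, Nonempty (α '' clsQ E A ↪ β '' clsQ E' (ρ A))) :
    ∃ l : X → X', Induces ρ l ∧ α.FactorsThrough (β ∘ l) := by
  let ι (A : Quotient E) : α '' clsQ E A ↪ β '' clsQ E' (ρ A) := (hρ A).some
  have exists_preimage (x : X) : ∃ w, Quotient.mk E' w = ρ (Quotient.mk E x) ∧
      β w = ι (Quotient.mk E x) ⟨α x, x, rfl, rfl⟩ :=
    (ι (Quotient.mk E x) ⟨α x, x, rfl, rfl⟩).2
  choose l hl β_l using exists_preimage
  -- `β_l` with the class of `x` as a variable, so that two points of one class can be compared.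
  have β_l_eq {A : Quotient E} {x : X} (hx : Quotient.mk E x = A) :
      β (l x) = ι A ⟨α x, x, hx, rfl⟩ := by
    subst hx
    exact β_l x
  refine ⟨l, hl, fun x y hxy => ?_⟩
  have same_class : Quotient.mk E x = Quotient.mk E y :=
    (hβ.comp hl).mk_eq_mk_iff.1 (congrArg _ hxy)
  have ι_eq : ι _ ⟨α x, x, same_class, rfl⟩ = ι _ ⟨α y, y, rfl, rfl⟩ :=
    Subtype.ext ((β_l_eq same_class).symm.trans (hxy.trans (β_l_eq rfl)))
  exact congrArg Subtype.val ((ι _).injective ι_eq)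

theorem Induces.nonempty_embedding_image_comp {l : X → X'} (hl : Induces ρ l) (β : X' → Y')
    (m : Y' → Y) (A : Quotient E) :
    Nonempty ((m ∘ β ∘ l) '' clsQ E A ↪ β '' clsQ E' (ρ A)) := by
  have image_subset : (m ∘ β ∘ l) '' clsQ E A ⊆ m '' (β '' clsQ E' (ρ A)) := by
    rw [Set.image_comp, Set.image_comp]
    gcongr
    exact hl.image_clsQ_subset A
  exact ⟨(Set.embeddingOfSubset _ _ image_subset).trans
    (Function.Embedding.ofSurjective _ Set.imageFactorization_surjective)⟩

theorem stmt7_general (hα : ∃ p : Quotient E ≃ Quotient F, Induces p α)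
    (hβ : ∃ q : Quotient E' ≃ Quotient F', Induces q β) :
    (∃ ρ : Quotient E ≃ Quotient E', ∀ A, Nonempty (α '' clsQ E A ↪ β '' clsQ E' (ρ A))) ↔
      ∃ l : X → X', (∃ ρ : Quotient E ≃ Quotient E', Induces ρ l) ∧
        ∃ m : Y' → Y, (∃ σ : Quotient F' ≃ Quotient F, Induces σ m) ∧ α = m ∘ β ∘ l := by
  constructor
  · obtain ⟨p, hα⟩ := hα
    obtain ⟨q, hβ⟩ := hβ
    rintro ⟨ρ, hρ⟩
    obtain ⟨l, hl, factors⟩ := exists_induces_factorsThrough_comp hβ hρ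
    obtain ⟨m, hm, hmβl⟩ := (hβ.comp hl).exists_comp_eq hα factors
    exact ⟨l, ⟨ρ, hl⟩, m, ⟨_, hm⟩, hmβl.symm⟩
  · rintro ⟨l, ⟨ρ, hl⟩, m, -, rfl⟩
    exact ⟨ρ, hl.nonempty_embedding_image_comp β m⟩

end Factorization

/-- `α = λβμ` for some `λ, μ ∈ reg(T)` iff there is a permutation `ρ` of `X/E`
with `|Aα| ≤ |(ρ A)β|` for every `E`-class `A`. -/
theorem stmt7 {X : Type u} [Nonempty X] (E : Setoid X) (α β : X → X)
    (hα : α ∈ regT E) (hβ : β ∈ regT E) :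
    (∃ ρ : Quotient E ≃ Quotient E, ∀ A : Quotient E,
        Cardinal.mk ↥(α '' clsQ E A) ≤ Cardinal.mk ↥(β '' clsQ E (ρ A))) ↔
      (∃ l ∈ regT E, ∃ m ∈ regT E, α = m ∘ β ∘ l) := by
  simpa only [mem_regT_iff_exists_induces, Cardinal.le_def] using
    stmt7_general (exists_induces_of_mem_regT hα) (exists_induces_of_mem_regT hβ)
end

section
/- Let r be a function assigning to each E-class A a cardinal number r(A) with 2 ≤ r(A) ≤ |A|⁺ (the cardinal successor of |A|), and set Q(r) = {α ∈ reg(T) : there exists a bijection σ of X/E onto itself such that |Aα| < r(σ(A)) for every E-class A}. Then Q(r) is a two-sided ideal of reg(T): for all α ∈ Q(r) and β ∈ reg(T), both αβ and βα belong to Q(r). -/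
universe u

/-- The ideal `Q(r)` of `reg(T)`. -/
def Qr {X : Type u} (E : Setoid X) (r : Quotient E → Cardinal.{u}) : Set (X → X) :=
  {α | α ∈ regT E ∧ ∃ σ : Quotient E ≃ Quotient E,
    ∀ A : Quotient E, Cardinal.mk ↥(α '' clsQ E A) < r (σ A)}

/-!
A map `β ∈ reg(T)` permutes the `E`-classes: preservation of `E` in both directions makes the
induced map on `X/E` well defined and injective, and meeting every class makes it surjective.
Let `σ` witness `α ∈ Q(r)`. Then `σ` also witnesses `β ∘ α ∈ Q(r)`, because `β` cannot enlarge the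
image `α(A)`. If `e` is the permutation of `X/E` induced by `β`, then `α(β(A)) ⊆ α(e(A))` for every
class `A`, so `A ↦ σ(e(A))` witnesses `α ∘ β ∈ Q(r)`.
-/

namespace TEstar

variable {X : Type u} {E : Setoid X} {α β : X → X}

theorem comp_mem (hβ : β ∈ TEstar E) (hα : α ∈ TEstar E) : β ∘ α ∈ TEstar E :=
  fun x y => (hα x y).trans (hβ (α x) (α y))

/-- The map `X/E → X/E` induced by `α ∈ T_{E*}(X)`, sending the class of `x` to that of `α x`. -/
def quotientMap (hα : α ∈ TEstar E) : Quotient E → Quotient E :=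
  Quotient.map α fun x y => (hα x y).1

theorem quotientMap_injective (hα : α ∈ TEstar E) : Function.Injective (quotientMap hα) := by
  rintro ⟨x⟩ ⟨y⟩ h
  exact Quotient.sound ((hα x y).2 (Quotient.exact h))

theorem image_clsQ_subset (hα : α ∈ TEstar E) (A : Quotient E) :
    α '' clsQ E A ⊆ clsQ E (quotientMap hα A) := by
  rintro _ ⟨x, rfl, rfl⟩
  rfl

end TEstar

namespace regT

variable {X : Type u} {E : Setoid X} {α β : X → X}

theorem comp_mem (hβ : β ∈ regT E) (hα : α ∈ regT E) : β ∘ α ∈ regT E := by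
  refine ⟨TEstar.comp_mem hβ.1 hα.1, fun x => ?_⟩
  obtain ⟨_, hxy, y, rfl⟩ := hβ.2 x
  obtain ⟨_, hyz, z, rfl⟩ := hα.2 y
  have hβyz : E.r (β y) (β (α z)) := (hβ.1 y (α z)).1 hyz
  exact ⟨β (α z), E.trans hxy hβyz, z, rfl⟩

theorem quotientMap_surjective (hα : α ∈ regT E) :
    Function.Surjective (TEstar.quotientMap hα.1) := by
  rintro ⟨x⟩
  obtain ⟨_, hxy, y, rfl⟩ := hα.2 x
  exact ⟨Quotient.mk E y, Quotient.sound (E.symm hxy)⟩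

/-- The permutation of `X/E` induced by `α ∈ reg(T)`. -/
noncomputable def quotientEquiv (hα : α ∈ regT E) : Quotient E ≃ Quotient E :=
  Equiv.ofBijective (TEstar.quotientMap hα.1)
    ⟨TEstar.quotientMap_injective hα.1, quotientMap_surjective hα⟩

theorem image_clsQ_subset (hα : α ∈ regT E) (A : Quotient E) :
    α '' clsQ E A ⊆ clsQ E (quotientEquiv hα A) :=
  TEstar.image_clsQ_subset hα.1 A

end regT

namespace Qr

variable {X : Type u} {E : Setoid X} {r : Quotient E → Cardinal.{u}} {α β : X → X}

theorem comp_mem_of_mem_left (hα : α ∈ Qr E r) (hβ : β ∈ regT E) : α ∘ β ∈ Qr E r := by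
  obtain ⟨hα, σ, hσ⟩ := hα
  refine ⟨regT.comp_mem hα hβ, (regT.quotientEquiv hβ).trans σ, fun A => ?_⟩
  calc Cardinal.mk ↥((α ∘ β) '' clsQ E A)
      = Cardinal.mk ↥(α '' (β '' clsQ E A)) := by rw [Set.image_comp]
    _ ≤ Cardinal.mk ↥(α '' clsQ E (regT.quotientEquiv hβ A)) :=
        Cardinal.mk_le_mk_of_subset (Set.image_mono (regT.image_clsQ_subset hβ A))
    _ < r (σ (regT.quotientEquiv hβ A)) := hσ _

theorem comp_mem_of_mem_right (hβ : β ∈ regT E) (hα : α ∈ Qr E r) : β ∘ α ∈ Qr E r := by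
  obtain ⟨hα, σ, hσ⟩ := hα
  refine ⟨regT.comp_mem hβ hα, σ, fun A => ?_⟩
  calc Cardinal.mk ↥((β ∘ α) '' clsQ E A)
      = Cardinal.mk ↥(β '' (α '' clsQ E A)) := by rw [Set.image_comp]
    _ ≤ Cardinal.mk ↥(α '' clsQ E A) := Cardinal.mk_image_le
    _ < r (σ A) := hσ A

end Qr

theorem stmt8_general {X : Type u} (E : Setoid X) (r : Quotient E → Cardinal.{u}) :
    ∀ α ∈ Qr E r, ∀ β ∈ regT E, β ∘ α ∈ Qr E r ∧ α ∘ β ∈ Qr E r :=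
  fun _ hα _ hβ => ⟨Qr.comp_mem_of_mem_right hβ hα, Qr.comp_mem_of_mem_left hα hβ⟩

/-- `Q(r)` is a two-sided ideal of `reg(T)`. -/
theorem stmt8 {X : Type u} [Nonempty X] (E : Setoid X)
    (r : Quotient E → Cardinal.{u})
    (hr : ∀ A : Quotient E, 2 ≤ r A ∧ r A ≤ Order.succ (Cardinal.mk ↥(clsQ E A))) :
    ∀ α ∈ Qr E r, ∀ β ∈ regT E, β ∘ α ∈ Qr E r ∧ α ∘ β ∈ Qr E r :=
  stmt8_general E r
end

section
/- Q(2) is a right group: (i) Q(2) is a regular semigroup, i.e., for every α ∈ Q(2) there exists β ∈ Q(2) with αβα = α (α(β(α(x))) = α(x) for all x); and (ii) Q(2) is left cancellative, i.e., for all α, β, γ ∈ Q(2), if γα = γβ (α(γ(x)) = β(γ(x)) for all x) then α = β. -/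
universe u

/-- The kernel `Q(2)` of `reg(T)`: every `E`-class has a one-point image. -/
def Q2 {X : Type u} (E : Setoid X) : Set (X → X) :=
  {α | α ∈ regT E ∧ ∀ x : X, ∃ y : X, α '' cls E x = {y}}

/-!
A map that is constant on `E`-classes is `s ∘ π` for the quotient map `π : X → X/E` and a unique
`s : X/E → X`, and it lies in `Q(2)` exactly when `π ∘ s` is a permutation `e` of `X/E`. If `r` is
any section of `π`, then `r ∘ e⁻¹ ∘ π` lies in `Q(2)` and is a generalised inverse of `s ∘ π`.
Left cancellation is the cancellation of the surjection `π ∘ γ`.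
-/

open Function

theorem eq_of_comp_eq_comp_of_factorsThrough {W X Y Z : Type*} {π : X → Z} {α β : X → Y}
    {γ : W → X} (hα : α.FactorsThrough π) (hβ : β.FactorsThrough π) (hγ : Surjective (π ∘ γ))
    (h : α ∘ γ = β ∘ γ) : α = β := by
  funext x
  obtain ⟨w, hw⟩ : ∃ w, π (γ w) = π x := hγ (π x)
  calc
    α x = α (γ w) := (hα hw).symm
    _ = β (γ w) := congrFun h w
    _ = β x := hβ hw

section

variable {X : Type u} {E : Setoid X}

theorem forall_cls_inter_range_nonempty_iff {W : Type*} {γ : W → X} :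
    (∀ x, (cls E x ∩ Set.range γ).Nonempty) ↔ Surjective (Quotient.mk E ∘ γ) := by
  refine Iff.trans (forall_congr' fun x => ⟨?_, ?_⟩) Quotient.mk_surjective.forall.symm
  · rintro ⟨_, hxw, w, rfl⟩
    exact ⟨w, Quotient.sound (E.symm hxw)⟩
  · rintro ⟨w, hw⟩
    exact ⟨γ w, E.symm (Quotient.exact hw), w, rfl⟩

theorem forall_image_cls_eq_singleton_iff {Y : Type*} {α : X → Y} :
    (∀ x, ∃ y, α '' cls E x = {y}) ↔ α.FactorsThrough (Quotient.mk E) := by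
  constructor
  · intro h x x' hxx'
    obtain ⟨y, hy⟩ := h x
    have eq_y : ∀ z ∈ cls E x, α z = y := fun z hz => hy.subset (Set.mem_image_of_mem α hz)
    exact (eq_y x (E.refl x)).trans (eq_y x' (Quotient.exact hxx')).symm
  · intro h x
    refine ⟨α x, Set.eq_singleton_iff_unique_mem.2 ⟨⟨x, E.refl x, rfl⟩, ?_⟩⟩
    rintro _ ⟨x', hxx', rfl⟩
    exact (h (Quotient.sound hxx')).symm

theorem comp_mk_mem_TEstar_iff {s : Quotient E → X} :
    s ∘ Quotient.mk E ∈ TEstar E ↔ Injective (Quotient.mk E ∘ s) := by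
  constructor
  · intro h p q
    induction p, q using Quotient.inductionOn₂ with
    | h x y => exact fun hxy => Quotient.sound ((h x y).2 (Quotient.exact hxy))
  · intro h x y
    exact ⟨fun hxy => Quotient.exact (congrArg (Quotient.mk E ∘ s) (Quotient.sound hxy)),
      fun hxy => Quotient.exact (h (Quotient.sound hxy))⟩

theorem comp_mk_mem_Q2_iff {s : Quotient E → X} :
    s ∘ Quotient.mk E ∈ Q2 E ↔ Bijective (Quotient.mk E ∘ s) := by
  have factors : (s ∘ Quotient.mk E).FactorsThrough (Quotient.mk E) :=
    fun _ _ h => congrArg s h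
  have surjective_iff : (∀ x, (cls E x ∩ Set.range (s ∘ Quotient.mk E)).Nonempty) ↔
      Surjective (Quotient.mk E ∘ s) :=
    forall_cls_inter_range_nonempty_iff.trans
      (Surjective.of_comp_iff (Quotient.mk E ∘ s) Quotient.mk_surjective)
  exact (and_iff_left (forall_image_cls_eq_singleton_iff.2 factors)).trans
    (and_congr comp_mk_mem_TEstar_iff surjective_iff)

theorem factorsThrough_mk_of_mem_Q2 {α : X → X} (hα : α ∈ Q2 E) :
    α.FactorsThrough (Quotient.mk E) :=
  forall_image_cls_eq_singleton_iff.1 hα.2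

theorem surjective_mk_comp_of_mem_regT {γ : X → X} (hγ : γ ∈ regT E) :
    Surjective (Quotient.mk E ∘ γ) :=
  forall_cls_inter_range_nonempty_iff.1 hγ.2

theorem exists_bijective_comp_mk_eq_of_mem_Q2 {α : X → X} (hα : α ∈ Q2 E) :
    ∃ s : Quotient E → X, Bijective (Quotient.mk E ∘ s) ∧ s ∘ Quotient.mk E = α := by
  let s : Quotient E → X :=
    Quotient.lift α fun _ _ h => factorsThrough_mk_of_mem_Q2 hα (Quotient.sound h)
  exact ⟨s, comp_mk_mem_Q2_iff.1 hα, rfl⟩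

theorem exists_mem_Q2_generalized_inverse {α : X → X} (hα : α ∈ Q2 E) :
    ∃ β ∈ Q2 E, ∀ x, α (β (α x)) = α x := by
  obtain ⟨s, hs, rfl⟩ := exists_bijective_comp_mk_eq_of_mem_Q2 hα
  let e : Quotient E ≃ Quotient E := Equiv.ofBijective (Quotient.mk E ∘ s) hs
  let t : Quotient E → X := Quotient.out ∘ e.symm
  have mk_t (q : Quotient E) : Quotient.mk E (t q) = e.symm q := Quotient.out_eq _
  have mk_comp_t : Quotient.mk E ∘ t = e.symm := funext mk_t
  refine ⟨t ∘ Quotient.mk E, comp_mk_mem_Q2_iff.2 (mk_comp_t ▸ e.symm.bijective), fun x => ?_⟩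
  calc
    s (Quotient.mk E (t (e (Quotient.mk E x)))) = s (e.symm (e (Quotient.mk E x))) :=
      congrArg s (mk_t _)
    _ = s (Quotient.mk E x) := congrArg s (e.symm_apply_apply _)

end

theorem stmt13_general {X : Type u} (E : Setoid X) :
    (∀ α ∈ Q2 E, ∃ β ∈ Q2 E, ∀ x : X, α (β (α x)) = α x) ∧
    (∀ α β γ : X → X, α.FactorsThrough (Quotient.mk E) → β.FactorsThrough (Quotient.mk E) →
      Surjective (Quotient.mk E ∘ γ) → α ∘ γ = β ∘ γ → α = β) :=
  ⟨fun _ => exists_mem_Q2_generalized_inverse,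
    fun _ _ _ => eq_of_comp_eq_comp_of_factorsThrough⟩

/-- `Q(2)` is a right group: it is regular and left cancellative. -/
theorem stmt13 {X : Type u} [Nonempty X] (E : Setoid X) :
    (∀ α ∈ Q2 E, ∃ β ∈ Q2 E, ∀ x : X, α (β (α x)) = α x) ∧
    (∀ α ∈ Q2 E, ∀ β ∈ Q2 E, ∀ γ ∈ Q2 E, α ∘ γ = β ∘ γ → α = β) :=
  ⟨(stmt13_general E).1, fun α hα β hβ γ hγ => (stmt13_general E).2 α β γ
    (factorsThrough_mk_of_mem_Q2 hα) (factorsThrough_mk_of_mem_Q2 hβ)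
    (surjective_mk_comp_of_mem_regT hγ.1)⟩
end

section
/- For each α ∈ Q(2), the set H_α = {β ∈ Q(2) : Xα = Xβ} is a subgroup of Q(2): H_α is closed under composition, there is an idempotent ε ∈ H_α with εβ = βε = β for all β ∈ H_α, and for every β ∈ H_α there is β' ∈ H_α with ββ' = β'β = ε. -/
universe u

/-- The `H`-class of `α` inside `Q(2)`. -/
def Hcl {X : Type u} (E : Setoid X) (α : X → X) : Set (X → X) :=
  {β | β ∈ Q2 E ∧ Set.range α = Set.range β}

/-!
The range of a map `α ∈ Q(2)` is a cross-section of `X / E`, i.e. the range of a section `s` of the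
quotient map `π : X → X / E`. The elements of `H_α` are then exactly the maps `s ∘ σ ∘ π` with `σ` a
permutation of `X / E`, and since `π ∘ s = id` these compose as the permutations do.
-/

section PermLift

open Function Equiv

variable {X Y : Type*} {π : X → Y} {s : Y → X}

/-- The self-map `s ∘ σ ∘ π` of `X` induced by a permutation `σ` of `Y`. It is meant for a section
`s` of `π`, in which case it carries the fibre of `π` over `y` to the point `s (σ y)`. -/
def permLift (π : X → Y) (s : Y → X) (σ : Perm Y) : X → X := s ∘ σ ∘ π

theorem permLift_comp_permLift (hs : LeftInverse π s) (σ τ : Perm Y) :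
    permLift π s σ ∘ permLift π s τ = permLift π s (σ * τ) :=
  funext fun x => congrArg (s ∘ σ) (hs (τ (π x)))

theorem range_permLift (hπ : Surjective π) (σ : Perm Y) :
    Set.range (permLift π s σ) = Set.range s :=
  (σ.surjective.comp hπ).range_comp s

theorem ker_permLift (hs : Injective s) (σ : Perm Y) :
    Setoid.ker (permLift π s σ) = Setoid.ker π :=
  Setoid.ext fun _ _ => (hs.comp σ.injective).eq_iff

theorem exists_permLift_eq (hs : LeftInverse π s) {β : X → X}
    (hker : Setoid.ker β = Setoid.ker π) (hrange : Set.range β = Set.range s) :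
    ∃ σ, permLift π s σ = β := by
  have apply_eq_iff (x y : X) : β x = β y ↔ π x = π y := Setoid.ext_iff.1 hker x y
  have apply_section (x : X) : β (s (π x)) = β x := (apply_eq_iff _ _).2 (hs (π x))
  have section_apply (x : X) : s (π (β x)) = β x := by
    obtain ⟨y, hy⟩ : β x ∈ Set.range s := hrange ▸ Set.mem_range_self x
    rw [← hy, hs y]
  have injective : Injective (π ∘ β ∘ s) := fun a b hab => by
    have hβ : β (s a) = β (s b) := by
      rw [← section_apply (s a), ← section_apply (s b)]
      exact congrArg s hab
    rw [← hs a, ← hs b]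
    exact (apply_eq_iff _ _).1 hβ
  have surjective : Surjective (π ∘ β ∘ s) := fun y => by
    obtain ⟨x, hx⟩ : s y ∈ Set.range β := hrange ▸ Set.mem_range_self y
    refine ⟨π x, ?_⟩
    simp only [comp_apply, apply_section, hx, hs y]
  refine ⟨Equiv.ofBijective _ ⟨injective, surjective⟩, funext fun x => ?_⟩
  calc s (π (β (s (π x)))) = β (s (π x)) := section_apply _
    _ = β x := apply_section x

theorem range_permLift_eq_setOf (hs : LeftInverse π s) :
    Set.range (permLift π s) =
      {β | Setoid.ker β = Setoid.ker π ∧ Set.range β = Set.range s} := by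
  ext β
  constructor
  · rintro ⟨σ, rfl⟩
    exact ⟨ker_permLift hs.injective σ, range_permLift hs.surjective σ⟩
  · rintro ⟨hker, hrange⟩
    exact exists_permLift_eq hs hker hrange

end PermLift

section CrossSection

open Function

variable {X : Type u} {E : Setoid X} {α : X → X}

theorem mem_TEstar_iff_comap_eq : α ∈ TEstar E ↔ E.comap α = E := by
  rw [eq_comm, Setoid.ext_iff]
  rfl

theorem forall_exists_image_cls_eq_singleton_iff :
    (∀ x, ∃ y, α '' cls E x = {y}) ↔ E ≤ Setoid.ker α := by
  constructor
  · intro h x y hxy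
    obtain ⟨z, hz⟩ := h x
    have apply_eq {w : X} (hw : w ∈ cls E x) : α w = z :=
      Set.mem_singleton_iff.1 (hz ▸ Set.mem_image_of_mem α hw)
    exact (apply_eq (E.refl x)).trans (apply_eq hxy).symm
  · refine fun h x => ⟨α x, Set.eq_singleton_iff_unique_mem.2 ⟨⟨x, E.refl x, rfl⟩, ?_⟩⟩
    rintro _ ⟨y, hxy, rfl⟩
    exact (h hxy).symm

theorem mem_TEstar_of_ker_eq (hker : Setoid.ker α = E)
    (hinj : Set.InjOn (Quotient.mk E) (Set.range α)) : α ∈ TEstar E := by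
  refine mem_TEstar_iff_comap_eq.2 (Setoid.ext fun x y => ?_)
  calc E (α x) (α y) ↔ Quotient.mk E (α x) = Quotient.mk E (α y) := Quotient.eq.symm
    _ ↔ α x = α y := hinj.eq_iff (Set.mem_range_self x) (Set.mem_range_self y)
    _ ↔ E x y := Setoid.ext_iff.1 hker x y

theorem ker_eq_of_mem_Q2 (hα : α ∈ Q2 E) : Setoid.ker α = E := by
  obtain ⟨⟨hE, -⟩, hconst⟩ := hα
  refine le_antisymm (fun x y (hxy : α x = α y) => ?_)
    (forall_exists_image_cls_eq_singleton_iff.1 hconst)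
  exact (hE x y).2 (hxy ▸ E.refl (α x))

theorem exists_section_of_mem_Q2 (hα : α ∈ Q2 E) :
    ∃ s : Quotient E → X, LeftInverse (Quotient.mk E) s ∧ Set.range s = Set.range α := by
  have apply_eq_iff (x y : X) : α x = α y ↔ E x y := Setoid.ext_iff.1 (ker_eq_of_mem_Q2 hα) x y
  obtain ⟨⟨hE, hmeet⟩, -⟩ := hα
  have exists_rep (q : Quotient E) : ∃ x, Quotient.mk E (α x) = q := by
    induction q using Quotient.inductionOn with | _ x
    obtain ⟨_, hxz, z, rfl⟩ := hmeet x
    exact ⟨z, Quotient.sound (E.symm hxz)⟩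
  choose r hr using exists_rep
  refine ⟨α ∘ r, hr, (Set.range_comp_subset_range r α).antisymm ?_⟩
  rintro _ ⟨x, rfl⟩
  exact ⟨Quotient.mk E (α x), (apply_eq_iff _ _).2 ((hE _ _).2 (Quotient.exact (hr _)))⟩

theorem mem_Q2_iff_of_section {s : Quotient E → X} (hs : LeftInverse (Quotient.mk E) s)
    (hrange : Set.range α = Set.range s) : α ∈ Q2 E ↔ Setoid.ker α = E := by
  refine ⟨ker_eq_of_mem_Q2, fun hker => ⟨⟨mem_TEstar_of_ker_eq hker ?_, fun x => ?_⟩, ?_⟩⟩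
  · rw [hrange]
    exact hs.rightInvOn_range.injOn
  · rw [hrange]
    exact ⟨s (Quotient.mk E x), E.symm (Quotient.exact (hs _)), Set.mem_range_self _⟩
  · exact forall_exists_image_cls_eq_singleton_iff.2 hker.ge

theorem Hcl_eq_range_permLift {s : Quotient E → X} (hs : LeftInverse (Quotient.mk E) s)
    (hrange : Set.range s = Set.range α) :
    Hcl E α = Set.range (permLift (Quotient.mk E) s) := by
  have ker_mk : Setoid.ker (Quotient.mk E) = E := Setoid.ker_mk_eq E
  ext β
  rw [range_permLift_eq_setOf hs, ker_mk]
  calc β ∈ Q2 E ∧ Set.range α = Set.range β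
      ↔ β ∈ Q2 E ∧ Set.range β = Set.range s := by rw [hrange, eq_comm (a := Set.range α)]
    _ ↔ Setoid.ker β = E ∧ Set.range β = Set.range s :=
      and_congr_left (mem_Q2_iff_of_section hs)

end CrossSection

/-- Each `H_α = {β ∈ Q(2) : Xα = Xβ}` is a subgroup of `Q(2)`. -/
theorem stmt15 {X : Type u} [Nonempty X] (E : Setoid X) (α : X → X)
    (hα : α ∈ Q2 E) :
    (∀ β ∈ Hcl E α, ∀ γ ∈ Hcl E α, γ ∘ β ∈ Hcl E α) ∧
    ∃ ε ∈ Hcl E α, ε ∘ ε = ε ∧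
      (∀ β ∈ Hcl E α, β ∘ ε = β ∧ ε ∘ β = β) ∧
      (∀ β ∈ Hcl E α, ∃ β' ∈ Hcl E α, β' ∘ β = ε ∧ β ∘ β' = ε) := by
  obtain ⟨s, hs, hrange⟩ := exists_section_of_mem_Q2 hα
  rw [Hcl_eq_range_permLift hs hrange]
  simp only [Set.forall_mem_range, Set.exists_range_iff, permLift_comp_permLift hs]
  refine ⟨fun σ τ => ⟨τ * σ, rfl⟩, 1, ?_, fun σ => ?_, fun σ => ⟨σ⁻¹, ?_⟩⟩
  · rw [mul_one]
  · rw [mul_one, one_mul]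
    exact ⟨rfl, rfl⟩
  · rw [inv_mul_cancel, mul_inv_cancel]
    exact ⟨rfl, rfl⟩
end

section
/- Every right group can be embedded into the kernel Q(2): if S is a nonempty semigroup that is regular (for every a ∈ S there exists b ∈ S with aba = a) and left cancellative (ca = cb implies a = b), then there exist an equivalence relation E on the underlying set S and an injective semigroup homomorphism ψ from S into T_{E*}(S) whose image is contained in Q(2) = {α ∈ reg(T_{E*}(S)) : |Aα| = 1 for every E-class A}. -/
/-!
Represent `S` on itself by right translations `x ↦ x * a` and let `x E y` mean that `x` and `y` have
the same left translation, so that right translations are constant on `E`-classes. If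
`a * b * a = a`, left cancellation makes the left translations by `a` and `b` mutually inverse;
hence `x * a E y * a` forces `x E y`, and `x * b * a E x` shows that every class meets `S * a`.
-/

universe u

/-- The kernel of the left regular representation `x ↦ (x * ·)`. In a right group, the product of a
group `G` and a right zero semigroup, its classes are the fibres of the projection to `G`. -/
def leftRegularKer (S : Type u) [Mul S] : Setoid S :=
  Setoid.ker fun x c : S => x * c

theorem leftRegularKer_r_iff {S : Type u} [Mul S] {x y : S} :
    (leftRegularKer S).r x y ↔ ∀ c, x * c = y * c :=
  funext_iff

theorem image_mul_right_cls_leftRegularKer {S : Type u} [Mul S] (a x : S) :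
    (· * a) '' cls (leftRegularKer S) x = {x * a} := by
  refine Set.Subset.antisymm ?_ (Set.singleton_subset_iff.2 ⟨x, (leftRegularKer S).refl x, rfl⟩)
  rintro _ ⟨y, hxy, rfl⟩
  exact (leftRegularKer_r_iff.1 hxy a).symm

section Semigroup

variable {S : Type u} [Semigroup S] {a b : S}

theorem mul_right_mem_TEstar_leftRegularKer (ha : Function.Surjective (a * ·)) :
    (· * a) ∈ TEstar (leftRegularKer S) := by
  intro x y
  simp only [leftRegularKer_r_iff, mul_assoc]
  exact ha.forall

theorem cls_leftRegularKer_inter_range_mul_right_nonempty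
    (hba : Function.LeftInverse (b * ·) (a * ·)) (x : S) :
    (cls (leftRegularKer S) x ∩ Set.range (· * a)).Nonempty := by
  refine ⟨x * b * a, leftRegularKer_r_iff.2 fun c => ?_, x * b, rfl⟩
  calc
    x * c = x * (b * (a * c)) := congrArg (x * ·) (hba c).symm
    _ = x * b * a * c := by simp only [mul_assoc]

theorem mul_right_mem_Q2_leftRegularKer (hba : Function.LeftInverse (b * ·) (a * ·))
    (hab : Function.RightInverse (b * ·) (a * ·)) : (· * a) ∈ Q2 (leftRegularKer S) :=
  ⟨⟨mul_right_mem_TEstar_leftRegularKer hab.surjective,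
    cls_leftRegularKer_inter_range_mul_right_nonempty hba⟩,
    fun x => ⟨x * a, image_mul_right_cls_leftRegularKer a x⟩⟩

theorem leftInverse_mul_left_of_mul_mul_eq_self [IsLeftCancelMul S] (h : a * b * a = a) :
    Function.LeftInverse (b * ·) (a * ·) := by
  intro c
  apply mul_left_cancel (a := a)
  calc
    a * (b * (a * c)) = a * b * a * c := by simp only [mul_assoc]
    _ = a * c := by rw [h]

end Semigroup

/-- Every right group `S` embeds into the kernel `Q(2)` of `reg(T_{E*}(S))`
for a suitable equivalence relation `E` on `S`. -/
theorem stmt19 {S : Type u} [Nonempty S] [Semigroup S]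
    (hreg : ∀ a : S, ∃ b : S, a * b * a = a)
    (hlc : ∀ a b c : S, c * a = c * b → a = b) :
    ∃ (E : Setoid S) (ψ : S → (S → S)),
      Function.Injective ψ ∧
      (∀ a b : S, ψ (a * b) = ψ b ∘ ψ a) ∧
      (∀ a : S, ψ a ∈ Q2 E) := by
  have : IsLeftCancelMul S := ⟨fun c a b => hlc a b c⟩
  have hinj : Function.Injective fun a x : S => x * a := fun _ _ h =>
    MulOpposite.op_injective (FaithfulSMul.eq_of_smul_eq_smul (congrFun h))
  refine ⟨leftRegularKer S, fun a x => x * a, hinj, fun a b => (comp_mul_right b a).symm,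
    fun a => ?_⟩
  obtain ⟨b, hb⟩ := hreg a
  have hba : Function.LeftInverse (b * ·) (a * ·) := leftInverse_mul_left_of_mul_mul_eq_self hb
  exact mul_right_mem_Q2_leftRegularKer hba
    (hba.rightInverse_of_injective (mul_right_injective b))
end
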